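/- arXiv:2602.01847 — 2 statements merged into one kernel-verified Lean document; each statement's English description precedes it below -/
import Mathlib

section
/- Let I=(V_I,E_I) be a fixed graph, P a strict partial order on E_I, and let ψ and χ be two label multiplicity distributions such that ψ is stochastically dominated by χ (i.e. P[Q_ψ ≥ k] ≤ P[Q_χ ≥ k] for every k, where Q_ψ∼ψ and Q_χ∼χ). Let 𝒢 be a sample from Γ_V(ψ) and ℋ a sample from Γ_V(χ) on the same finite vertex set V. Then: (a) for any 0<δ<1, the probability that 𝒢 contains (I,P) as a δ-temporal motif is at most the probability that ℋ contains (I,P) as a δ-temporal motif; and (b) for any integers 0<β<T, the probability that the T-discretization of 𝒢 contains (I,P) as a β-temporal motif is at most the probability that the T-discretization of ℋ contains (I,P) as a β-temporal motif. -/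
open MeasureTheory ProbabilityTheory Filter Set
open scoped ENNReal NNReal Topology

noncomputable section

namespace RTG

/-- A temporal graph on vertex type `V`, given by the finite set of real time labels
attached to each potential edge (unordered pair of vertices). -/
abbrev TGraph (V : Type*) := Sym2 V → Finset ℝ

/-- `P` is a strict partial order supported on the set `s`. -/
def StrictPartialOrderOn {α : Type*} (s : Set α) (P : α → α → Prop) : Prop :=
  (∀ a, ¬ P a a) ∧ (∀ a b c, P a b → P b c → P a c) ∧ ∀ a b, P a b → a ∈ s ∧ b ∈ s

/-- The temporal graph `Λ` contains `(H, P)` as a `δ`-temporal motif. -/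
def Contains {VH V : Type*} (H : SimpleGraph VH) (P : Sym2 VH → Sym2 VH → Prop)
    (Λ : TGraph V) (δ : ℝ) : Prop :=
  ∃ Φ : VH → V, Function.Injective Φ ∧
    ∃ lab : Sym2 VH → ℝ,
      (∀ e ∈ H.edgeSet, lab e ∈ Λ (Sym2.map Φ e)) ∧
      (∀ e f, P e f → lab e < lab f) ∧
      (∀ e ∈ H.edgeSet, ∀ f ∈ H.edgeSet, lab e - lab f < δ)

/-- The sparsity `ρ_H` of a graph `H`: the minimum over subgraphs with at least two
edges of `|V_I| / (|E_I| - 1)`. -/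
def sparsity {VH : Type*} (H : SimpleGraph VH) : ℝ :=
  sInf {x : ℝ | ∃ I : H.Subgraph, 2 ≤ I.edgeSet.ncard ∧
    x = (I.verts.ncard : ℝ) / ((I.edgeSet.ncard : ℝ) - 1)}

/-- The space of label data on a single edge: a number `k` of labels together with the
tuple of `k` label values (indexed in order of sampling). -/
abbrev LabelSpace := Σ k : ℕ, Fin k → ℝ

/-- The uniform distribution on `(0, 1]`. -/
def unif01 : Measure ℝ := volume.restrict (Set.Ioc 0 1)

/-- The uniform distribution on `{1, …, T}` (as a measure on `ℝ`). -/
def unifDisc (T : ℕ) : Measure ℝ :=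
  (T : ℝ≥0∞)⁻¹ • ∑ k ∈ Finset.Icc 1 T, Measure.dirac (k : ℝ)

/-- The distribution of the label data of a single edge: the number of labels is drawn
according to `ψ` and, independently, each label value is drawn according to `ν`. -/
def edgeMeasure (ν : Measure ℝ) (ψ : Measure ℕ) : Measure LabelSpace :=
  Measure.sum fun k => ψ {k} • (Measure.pi fun _ : Fin k => ν).map (Sigma.mk k)

/-- The doubly random temporal graph model on vertex set `V` with label value
distribution `ν` and label multiplicity distribution `ψ`: all edges receive independent
identically distributed label data. -/
def model (V : Type*) [Fintype V] [DecidableEq V] (ν : Measure ℝ) (ψ : Measure ℕ) :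
    Measure (Sym2 V → LabelSpace) :=
  Measure.pi fun _ : Sym2 V => edgeMeasure ν ψ

/-- The continuous doubly random temporal graph `Γ_V(ψ)`. -/
abbrev contModel (V : Type*) [Fintype V] [DecidableEq V] (ψ : Measure ℕ) :
    Measure (Sym2 V → LabelSpace) := model V unif01 ψ

/-- The discrete doubly random temporal graph `Γ_V(ψ, T)`. -/
abbrev discModel (V : Type*) [Fintype V] [DecidableEq V] (ψ : Measure ℕ) (T : ℕ) :
    Measure (Sym2 V → LabelSpace) := model V (unifDisc T) ψ

/-- The temporal graph determined by a sample `ω` of the model: each non-loop edge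
carries the sampled set of labels. -/
def toTGraph {V : Type*} [DecidableEq V] (ω : Sym2 V → LabelSpace) : TGraph V :=
  fun e => if e.IsDiag then ∅ else Finset.image (ω e).2 Finset.univ

/-- The `T`-discretization of a temporal graph: each label `l` is replaced by `⌈T·l⌉`. -/
def discretize {V : Type*} (T : ℕ) (Λ : TGraph V) : TGraph V :=
  fun e => (Λ e).image fun l => ((⌈(T : ℝ) * l⌉ : ℤ) : ℝ)

/-- `ψ` is a label multiplicity distribution: a probability distribution on `ℕ` with
positive finite mean and finite second moment. -/
def IsLMD (ψ : Measure ℕ) : Prop :=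
  IsProbabilityMeasure ψ ∧ Integrable (fun k : ℕ => (k : ℝ)) ψ ∧
    Integrable (fun k : ℕ => (k : ℝ) ^ 2) ψ ∧ 0 < ∫ k, (k : ℝ) ∂ψ

/-- The mean `r` of a label multiplicity distribution. -/
def lmdMean (ψ : Measure ℕ) : ℝ := ∫ k, (k : ℝ) ∂ψ

/-- The second moment `r₂` of a label multiplicity distribution. -/
def lmdSq (ψ : Measure ℕ) : ℝ := ∫ k, (k : ℝ) ^ 2 ∂ψ

/-- `q = P[Q > 0]` for a label multiplicity distribution. -/
def lmdPos (ψ : Measure ℕ) : ℝ := (ψ {k | 0 < k}).toReal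

/-- `v` is reachable from the set `S` by time `t` in the temporal graph `Λ`. -/
def ReachBy {V : Type*} (Λ : TGraph V) (S : Set V) (t : ℝ) (v : V) : Prop :=
  v ∈ S ∨ ∃ (k : ℕ) (f : ℕ → V) (ts : ℕ → ℝ), 0 < k ∧ f 0 ∈ S ∧ f k = v ∧
    (∀ i < k, ts i ∈ Λ s(f i, f (i + 1))) ∧
    (∀ i j, i < j → j < k → ts i < ts j) ∧ ts (k - 1) ≤ t

/-- The reachability ball `B_Λ(S, t)`. -/
def ball {V : Type*} (Λ : TGraph V) (S : Set V) (t : ℝ) : Set V := {v | ReachBy Λ S t v}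

/-- The doubling time of the set `S` in `Λ` (with value `∞` if the reachability ball
never doubles in size). -/
def doubleTime {V : Type*} (Λ : TGraph V) (S : Set V) : ℝ≥0∞ :=
  ⨅ (t : ℝ) (_ : 0 ≤ t ∧ 2 * S.ncard ≤ (ball Λ S t).ncard), ENNReal.ofReal t

/-- The doubling time of the temporal graph `Λ`: the maximum doubling time over all
nonempty vertex sets of size at most half the number of vertices. -/
def doubleAll {V : Type*} [Fintype V] (Λ : TGraph V) : ℝ≥0∞ :=
  ⨆ (S : Set V) (_ : S.Nonempty ∧ 2 * S.ncard ≤ Fintype.card V), doubleTime Λ S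

/-- `Double⁻`: the maximum doubling time over nonempty sets of size at most `n/4`. -/
def doubleSmall {V : Type*} [Fintype V] (Λ : TGraph V) : ℝ≥0∞ :=
  ⨆ (S : Set V) (_ : S.Nonempty ∧ 4 * S.ncard ≤ Fintype.card V), doubleTime Λ S

/-- `Double⁺`: the maximum doubling time over sets of size in `(n/4, n/2]`. -/
def doubleLarge {V : Type*} [Fintype V] (Λ : TGraph V) : ℝ≥0∞ :=
  ⨆ (S : Set V) (_ : Fintype.card V < 4 * S.ncard ∧ 2 * S.ncard ≤ Fintype.card V),
    doubleTime Λ S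

/-- The partial reversal `ℛ(Λ, t)`: every label `l < t` is replaced by `t - l`. -/
def reverse {V : Type*} (Λ : TGraph V) (t : ℝ) : TGraph V :=
  fun e => (Λ e).image fun l => if l < t then t - l else l

/-- The rank of a time `x` among all the labels of the sample `ω`: the number of labels
(on genuine, non-loop, edges) that are at most `x`. -/
def rank {V : Type*} [Fintype V] [DecidableEq V] (ω : Sym2 V → LabelSpace) (x : ℝ) : ℕ :=
  ∑ e ∈ Finset.univ.filter (fun e : Sym2 V => ¬ e.IsDiag),
    Nat.card {i : Fin (ω e).1 // (ω e).2 i ≤ x}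

/-- The order discretization `𝒢^O` of the sample `ω`: each label is replaced by its rank
among all labels. -/
def orderDisc {V : Type*} [Fintype V] [DecidableEq V] (ω : Sym2 V → LabelSpace) :
    TGraph V :=
  fun e => if e.IsDiag then ∅
    else Finset.image (fun i => (rank ω ((ω e).2 i) : ℝ)) Finset.univ

/-!
The number of labels on an edge is a decreasing quantile function applied to a uniform seed, and
the labels themselves are the corresponding initial segment of an infinite i.i.d. stream. Feeding
the same seeds and streams to both models couples them: as `ψ` is dominated by `χ`, its quantile
function is pointwise smaller, so each edge of `𝒢` carries a subset of the labels it carries in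
`ℋ`. Containing a motif is preserved when labels are added, before or after discretization.
-/

section Quantile

lemma tendsto_measure_Ioi_atTop_zero {α : Type*} [LinearOrder α] [TopologicalSpace α]
    [ClosedIicTopology α] [MeasurableSpace α] [OpensMeasurableSpace α] [Nonempty α]
    [(atTop : Filter α).IsCountablyGenerated] (μ : Measure α) [IsFiniteMeasure μ] :
    Tendsto (fun a => μ (Ioi a)) atTop (𝓝 0) := by
  have hempty : ⋂ a : α, Ioi a = ∅ :=
    eq_empty_of_forall_notMem fun a ha => lt_irrefl a (mem_iInter.1 ha a)
  have hlim := tendsto_measure_iInter_atTop (μ := μ) (s := fun a : α => Ioi a)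
    (fun _ => measurableSet_Ioi.nullMeasurableSet) (fun _ _ => Ioi_subset_Ioi)
    ⟨Classical.arbitrary α, measure_ne_top _ _⟩
  rwa [hempty, measure_empty] at hlim

/-- The decreasing quantile function of a distribution on `ℕ`: the least `k` such that the tail
beyond `k` has mass at most `u`. For `u ≤ 0`, where no such `k` need exist, the value is `0`. -/
def tailQuantile (ψ : Measure ℕ) (u : ℝ) : ℕ :=
  sInf {k | u ≤ 0 ∨ ψ (Ioi k) ≤ ENNReal.ofReal u}

variable (ψ χ : Measure ℕ)

lemma tailQuantile_le_iff [IsFiniteMeasure ψ] (u : ℝ) (k : ℕ) :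
    tailQuantile ψ u ≤ k ↔ u ≤ 0 ∨ ψ (Ioi k) ≤ ENNReal.ofReal u := by
  have hne : {k | u ≤ 0 ∨ ψ (Ioi k) ≤ ENNReal.ofReal u}.Nonempty := by
    rcases le_or_gt u 0 with hu | hu
    · exact ⟨0, Or.inl hu⟩
    · obtain ⟨k, hk⟩ := ((tendsto_measure_Ioi_atTop_zero ψ).eventually_le_const
        (ENNReal.ofReal_pos.2 hu)).exists
      exact ⟨k, Or.inr hk⟩
  refine ⟨fun hk => (Nat.sInf_mem hne).imp_right fun htail => ?_, fun hk => Nat.sInf_le hk⟩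
  exact (measure_mono (Ioi_subset_Ioi hk)).trans htail

lemma tailQuantile_preimage_Ioi [IsFiniteMeasure ψ] (k : ℕ) :
    tailQuantile ψ ⁻¹' Ioi k = Ioo 0 (ψ.real (Ioi k)) := by
  ext u
  rw [mem_preimage, mem_Ioi, ← not_le, tailQuantile_le_iff, not_or, not_le, not_le, mem_Ioo]
  exact and_congr_right fun hu =>
    ENNReal.ofReal_lt_iff_lt_toReal hu.le (measure_ne_top ψ _)

lemma measurable_tailQuantile [IsFiniteMeasure ψ] : Measurable (tailQuantile ψ) :=
  measurable_of_Ioi fun k => tailQuantile_preimage_Ioi ψ k ▸ measurableSet_Ioo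

variable {ψ χ} in
lemma tailQuantile_mono [IsFiniteMeasure ψ] [IsFiniteMeasure χ]
    (hdom : ∀ k, ψ (Ioi k) ≤ χ (Ioi k)) (u : ℝ) : tailQuantile ψ u ≤ tailQuantile χ u :=
  (tailQuantile_le_iff ψ u _).2 <|
    ((tailQuantile_le_iff χ u _).1 le_rfl).imp_right (hdom _).trans

instance isProbabilityMeasure_unif01 : IsProbabilityMeasure unif01 := ⟨by simp [unif01]⟩

lemma unif01_Ioo_zero {c : ℝ} (hc : c ≤ 1) : unif01 (Ioo 0 c) = ENNReal.ofReal c := by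
  have hsub : Ioo 0 c ⊆ Ioc 0 1 := fun _ hu => ⟨hu.1, hu.2.le.trans hc⟩
  rw [unif01, Measure.restrict_eq_self _ hsub, Real.volume_Ioo, sub_zero]

lemma map_tailQuantile [IsProbabilityMeasure ψ] : unif01.map (tailQuantile ψ) = ψ := by
  have hmeas := measurable_tailQuantile ψ
  have := Measure.isProbabilityMeasure_map (μ := unif01) hmeas.aemeasurable
  refine Measure.ext_of_Ici _ _ fun k => ?_
  rcases k with _ | k
  · rw [← bot_eq_zero, Ici_bot, measure_univ, measure_univ]
  · rw [← Order.succ_eq_add_one, Order.Ici_succ, Measure.map_apply hmeas measurableSet_Ioi,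
      tailQuantile_preimage_Ioi, unif01_Ioo_zero measureReal_le_one, ofReal_measureReal]

end Quantile

section EdgeMeasure

lemma measurable_sigma_mk {ι : Type*} {β : ι → Type*} [∀ i, MeasurableSpace (β i)] (i : ι) :
    Measurable (Sigma.mk i : β i → Sigma β) :=
  fun _ hA => MeasurableSpace.measurableSet_iInf.1 hA i

lemma measurable_of_comp_sigma_mk {ι γ : Type*} {β : ι → Type*} [∀ i, MeasurableSpace (β i)]
    [MeasurableSpace γ] {f : Sigma β → γ} (hf : ∀ i, Measurable fun x => f ⟨i, x⟩) :
    Measurable f :=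
  fun _ hA => MeasurableSpace.measurableSet_iInf.2 fun i => hf i hA

/-- The label data consisting of the first `p.1` entries of the infinite stream `p.2`. -/
def takeLabels (p : ℕ × (ℕ → ℝ)) : LabelSpace := ⟨p.1, fun i => p.2 i⟩

lemma measurable_takeLabels : Measurable takeLabels :=
  measurable_from_prod_countable_right fun k =>
    (measurable_sigma_mk k).comp (by fun_prop : Measurable fun (x : ℕ → ℝ) (i : Fin k) => x i)

variable (ν : Measure ℝ) [IsProbabilityMeasure ν]

lemma map_takeLabels_prod (ψ : Measure ℕ) :
    (ψ.prod (Measure.infinitePi fun _ : ℕ => ν)).map takeLabels = edgeMeasure ν ψ := by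
  have hdecomp : ψ.prod (Measure.infinitePi fun _ : ℕ => ν) = Measure.sum fun k =>
      ψ {k} • (Measure.infinitePi fun _ : ℕ => ν).map (Prod.mk k) := by
    conv_lhs => rw [← Measure.sum_smul_dirac ψ]
    simp only [Measure.prod_sum_left, Measure.prod_smul_left, Measure.dirac_prod]
  rw [hdecomp, Measure.map_sum measurable_takeLabels.aemeasurable, edgeMeasure]
  congr 1 with k : 1
  have hpi : (Measure.infinitePi fun _ : ℕ => ν).map (fun x (i : Fin k) => x i) =
      Measure.pi fun _ : Fin k => ν := by
    rw [Measure.map_infinitePi_infinitePi_of_inj Fin.val_injective, Measure.infinitePi_eq_pi]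
  rw [Measure.map_smul, Measure.map_map measurable_takeLabels measurable_prodMk_left, ← hpi,
    Measure.map_map (measurable_sigma_mk k) (by fun_prop)]
  rfl

/-- Samples the label data of an edge from a seed `p.1`, which determines the number of labels,
and an infinite stream `p.2` of label values. The seed and the stream do not depend on `ψ`, so
that the samples for different `ψ` are coupled. -/
def sampleLabels (ψ : Measure ℕ) (p : ℝ × (ℕ → ℝ)) : LabelSpace :=
  takeLabels (Prod.map (tailQuantile ψ) id p)

lemma measurable_sampleLabels (ψ : Measure ℕ) [IsFiniteMeasure ψ] :
    Measurable (sampleLabels ψ) :=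
  measurable_takeLabels.comp ((measurable_tailQuantile ψ).prodMap measurable_id)

lemma map_sampleLabels (ψ : Measure ℕ) [IsProbabilityMeasure ψ] :
    (unif01.prod (Measure.infinitePi fun _ : ℕ => ν)).map (sampleLabels ψ) = edgeMeasure ν ψ := by
  have hquantile := measurable_tailQuantile ψ
  have hprod : (unif01.prod (Measure.infinitePi fun _ : ℕ => ν)).map
      (Prod.map (tailQuantile ψ) id) = ψ.prod (Measure.infinitePi fun _ : ℕ => ν) := by
    rw [← Measure.map_prod_map _ _ hquantile measurable_id, map_tailQuantile, Measure.map_id]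
  rw [← map_takeLabels_prod, ← hprod,
    Measure.map_map measurable_takeLabels (hquantile.prodMap measurable_id)]
  rfl

lemma map_pi_sampleLabels {ι : Type*} [Fintype ι] (ν : ι → Measure ℝ)
    [∀ i, IsProbabilityMeasure (ν i)] (ψ : ι → Measure ℕ) [∀ i, IsProbabilityMeasure (ψ i)] :
    (Measure.pi fun i => unif01.prod (Measure.infinitePi fun _ : ℕ => ν i)).map
      (fun p i => sampleLabels (ψ i) (p i)) = Measure.pi fun i => edgeMeasure (ν i) (ψ i) := by
  have hmeas i := (measurable_sampleLabels (ψ i)).aemeasurable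
    (μ := unif01.prod (Measure.infinitePi fun _ : ℕ => ν i))
  have _ i := Measure.isProbabilityMeasure_map (hmeas i)
  rw [Measure.pi_map_pi hmeas]
  simp only [map_sampleLabels]

end EdgeMeasure

section Prefix

/-- The `i`-th label of an edge, with the junk value `0` if there are at most `i` labels. -/
def label (i : ℕ) (p : LabelSpace) : ℝ := if h : i < p.1 then p.2 ⟨i, h⟩ else 0

lemma measurable_label (i : ℕ) : Measurable (label i) := by
  refine measurable_of_comp_sigma_mk fun k => ?_
  by_cases hi : i < k
  · simpa only [label, hi, dite_true] using measurable_pi_apply (X := fun _ : Fin k => ℝ) ⟨i, hi⟩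
  · simpa only [label, hi, dite_false] using measurable_const

lemma measurable_labelCount : Measurable (Sigma.fst : LabelSpace → ℕ) :=
  measurable_of_comp_sigma_mk fun _ => measurable_const

/-- The prefix order on label data: the labels of `q` start with those of `p`. -/
def IsLabelPrefix (p q : LabelSpace) : Prop := p.1 ≤ q.1 ∧ ∀ i < p.1, label i p = label i q

lemma isLabelPrefix_sampleLabels {ψ χ : Measure ℕ} [IsFiniteMeasure ψ] [IsFiniteMeasure χ]
    (hdom : ∀ k, ψ (Ioi k) ≤ χ (Ioi k)) (p : ℝ × (ℕ → ℝ)) :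
    IsLabelPrefix (sampleLabels ψ p) (sampleLabels χ p) := by
  have hle : tailQuantile ψ p.1 ≤ tailQuantile χ p.1 := tailQuantile_mono hdom p.1
  refine ⟨hle, fun i (hi : i < tailQuantile ψ p.1) => ?_⟩
  simp [label, sampleLabels, takeLabels, hi, hi.trans_le hle]

theorem pi_edgeMeasure_le_of_isLabelPrefix {ι : Type*} [Fintype ι] (ν : ι → Measure ℝ)
    [∀ i, IsProbabilityMeasure (ν i)] {ψ χ : ι → Measure ℕ} [∀ i, IsProbabilityMeasure (ψ i)]
    [∀ i, IsProbabilityMeasure (χ i)] (hdom : ∀ i k, ψ i (Ioi k) ≤ χ i (Ioi k))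
    {A : Set (ι → LabelSpace)} (hA : MeasurableSet A)
    (hupper : ∀ ω ω', (∀ i, IsLabelPrefix (ω i) (ω' i)) → ω ∈ A → ω' ∈ A) :
    (Measure.pi fun i => edgeMeasure (ν i) (ψ i)) A ≤
      (Measure.pi fun i => edgeMeasure (ν i) (χ i)) A := by
  have hmeas (φ : ι → Measure ℕ) [∀ i, IsProbabilityMeasure (φ i)] :
      Measurable fun (p : ι → ℝ × (ℕ → ℝ)) i => sampleLabels (φ i) (p i) :=
    measurable_pi_lambda _ fun i => (measurable_sampleLabels (φ i)).comp (measurable_pi_apply i)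
  rw [← map_pi_sampleLabels ν ψ, ← map_pi_sampleLabels ν χ, Measure.map_apply (hmeas ψ) hA,
    Measure.map_apply (hmeas χ) hA]
  exact measure_mono fun p => hupper _ _ fun i => isLabelPrefix_sampleLabels (hdom i) (p i)

end Prefix

section Motif

variable {V VH : Type*}

/-- The temporal graph obtained by applying `g` to every label; discretization and the identity
are both of this form. -/
def relabel (g : ℝ → ℝ) (Λ : TGraph V) : TGraph V := fun e => (Λ e).image g

lemma relabel_id (Λ : TGraph V) : relabel id Λ = Λ := funext fun _ => Finset.image_id

/-- The motif `(H, P)` occurs at the vertex map `Φ` in the sample `ω` relabelled by `g`, where the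
edge `e` of `H` uses the label with index `idx e` on its image. -/
def OccursAt (H : SimpleGraph VH) (P : Sym2 VH → Sym2 VH → Prop) (g : ℝ → ℝ) (δ : ℝ)
    (Φ : VH → V) (idx : Sym2 VH → ℕ) (ω : Sym2 V → LabelSpace) : Prop :=
  let lab e := g (label (idx e) (ω (e.map Φ)))
  (∀ e ∈ H.edgeSet, idx e < (ω (e.map Φ)).1) ∧
    (∀ e f, P e f → lab e < lab f) ∧
    (∀ e ∈ H.edgeSet, ∀ f ∈ H.edgeSet, lab e - lab f < δ)

variable {H : SimpleGraph VH} {P : Sym2 VH → Sym2 VH → Prop} {g : ℝ → ℝ}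

lemma measurable_occursAt [Finite VH] (hg : Measurable g) (δ : ℝ) (Φ : VH → V)
    (idx : Sym2 VH → ℕ) : Measurable (OccursAt H P g δ Φ idx) := by
  have : Finite (Sym2 VH) := Quot.finite _
  have hlab (e : Sym2 VH) : Measurable fun ω : Sym2 V → LabelSpace =>
      g (label (idx e) (ω (e.map Φ))) :=
    hg.comp ((measurable_label _).comp (measurable_pi_apply _))
  have hcount (e : Sym2 VH) : Measurable fun ω : Sym2 V → LabelSpace => (ω (e.map Φ)).1 :=
    measurable_labelCount.comp (measurable_pi_apply _)
  refine .and (.forall fun e => .forall fun _ => ?_)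
    (.and (.forall fun e => .forall fun f => .forall fun _ => ?_)
      (.forall fun e => .forall fun _ => .forall fun f => .forall fun _ => ?_))
  · exact measurableSet_setOfPred.1 (measurableSet_lt measurable_const (hcount e))
  · exact measurableSet_setOfPred.1 (measurableSet_lt (hlab e) (hlab f))
  · exact measurableSet_setOfPred.1 (measurableSet_lt ((hlab e).sub (hlab f)) measurable_const)

lemma Contains.mono {Λ Λ' : TGraph V} {δ : ℝ} (hsub : ∀ e, Λ e ⊆ Λ' e) :
    Contains H P Λ δ → Contains H P Λ' δ :=
  fun ⟨Φ, hΦ, lab, hmem, hrest⟩ => ⟨Φ, hΦ, lab, fun e he => hsub _ (hmem e he), hrest⟩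

variable [DecidableEq V]

lemma mem_toTGraph {ω : Sym2 V → LabelSpace} {e : Sym2 V} {x : ℝ} :
    x ∈ toTGraph ω e ↔ ¬ e.IsDiag ∧ ∃ i < (ω e).1, label i (ω e) = x := by
  by_cases he : e.IsDiag
  · simp [toTGraph, he]
  · simp +contextual [toTGraph, label, he, Fin.exists_iff, ← exists_prop]

lemma toTGraph_mono {ω ω' : Sym2 V → LabelSpace} (hω : ∀ e, IsLabelPrefix (ω e) (ω' e))
    (e : Sym2 V) : toTGraph ω e ⊆ toTGraph ω' e := by
  intro x hx
  obtain ⟨he, i, hi, rfl⟩ := mem_toTGraph.1 hx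
  exact mem_toTGraph.2 ⟨he, i, hi.trans_le (hω e).1, ((hω e).2 i hi).symm⟩

lemma contains_relabel_iff_exists_occursAt
    (hP : ∀ e f, P e f → e ∈ H.edgeSet ∧ f ∈ H.edgeSet) (δ : ℝ) (ω : Sym2 V → LabelSpace) :
    Contains H P (relabel g (toTGraph ω)) δ ↔
      ∃ (Φ : VH ↪ V) (idx : Sym2 VH → ℕ), OccursAt H P g δ Φ idx ω := by
  constructor
  · rintro ⟨Φ, hΦ, lab, hmem, hlt, hδ⟩
    have hidx : ∀ e, ∃ i, e ∈ H.edgeSet →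
        i < (ω (e.map Φ)).1 ∧ g (label i (ω (e.map Φ))) = lab e := by
      intro e
      by_cases he : e ∈ H.edgeSet
      · obtain ⟨x, hx, hgx⟩ := Finset.mem_image.1 (hmem e he)
        obtain ⟨-, i, hi, rfl⟩ := mem_toTGraph.1 hx
        exact ⟨i, fun _ => ⟨hi, hgx⟩⟩
      · exact ⟨0, fun h => absurd h he⟩
    choose idx hidx using hidx
    refine ⟨⟨Φ, hΦ⟩, idx, fun e he => (hidx e he).1, fun e f hef => ?_, fun e he f hf => ?_⟩
    · simpa [(hidx e (hP e f hef).1).2, (hidx f (hP e f hef).2).2] using hlt e f hef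
    · simpa [(hidx e he).2, (hidx f hf).2] using hδ e he f hf
  · rintro ⟨Φ, idx, hcount, hlt, hδ⟩
    refine ⟨Φ, Φ.injective, _, fun e he => Finset.mem_image_of_mem g ?_, hlt, hδ⟩
    have hdiag := (Sym2.isDiag_map Φ.injective).not.2 (H.not_isDiag_of_mem_edgeSet he)
    exact mem_toTGraph.2 ⟨hdiag, idx e, hcount e he, rfl⟩

lemma measurableSet_contains_relabel [Finite V]
    (hP : ∀ e f, P e f → e ∈ H.edgeSet ∧ f ∈ H.edgeSet) (hg : Measurable g) (δ : ℝ) :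
    MeasurableSet {ω : Sym2 V → LabelSpace | Contains H P (relabel g (toTGraph ω)) δ} := by
  simp only [contains_relabel_iff_exists_occursAt hP]
  have : Countable (VH ↪ V) := by
    cases finite_or_infinite VH <;> infer_instance
  refine measurableSet_setOfPred.2 <| .exists fun Φ => ?_
  have : Finite VH := .of_injective Φ Φ.injective
  have : Finite (Sym2 VH) := Quot.finite _
  exact .exists fun idx => measurable_occursAt hg δ Φ idx

end Motif

theorem statement11_general {V VH : Type*} [Fintype V] [DecidableEq V]
    (H : SimpleGraph VH) (P : Sym2 VH → Sym2 VH → Prop)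
    (hP : ∀ e f, P e f → e ∈ H.edgeSet ∧ f ∈ H.edgeSet)
    (ψ χ : Measure ℕ) [IsProbabilityMeasure ψ] [IsProbabilityMeasure χ]
    (hdom : ∀ k : ℕ, ψ (Ici k) ≤ χ (Ici k)) (ν : Measure ℝ) [IsProbabilityMeasure ν]
    {g : ℝ → ℝ} (hg : Measurable g) (δ : ℝ) :
    model V ν ψ {ω | Contains H P (relabel g (toTGraph ω)) δ}
      ≤ model V ν χ {ω | Contains H P (relabel g (toTGraph ω)) δ} := by
  have htail (k : ℕ) : ψ (Ioi k) ≤ χ (Ioi k) := by simpa only [← Order.Ici_succ] using hdom _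
  refine pi_edgeMeasure_le_of_isLabelPrefix (fun _ => ν) (fun _ => htail)
    (measurableSet_contains_relabel hP hg δ) fun ω ω' hω => Contains.mono fun e => ?_
  exact Finset.image_subset_image (toTGraph_mono hω e)

/-- Stochastic domination of label multiplicity distributions yields
domination of motif-containment probabilities, in both the continuous model and its
`T`-discretizations. -/
theorem statement11 {V VH : Type} [Fintype V] [DecidableEq V]
    (H : SimpleGraph VH) (P : Sym2 VH → Sym2 VH → Prop)
    (hP : StrictPartialOrderOn H.edgeSet P)
    (ψ χ : Measure ℕ) (hψ : IsLMD ψ) (hχ : IsLMD χ)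
    (hdom : ∀ k : ℕ, ψ (Set.Ici k) ≤ χ (Set.Ici k)) :
    (∀ δ : ℝ, 0 < δ → δ < 1 →
      contModel V ψ {ω | Contains H P (toTGraph ω) δ}
        ≤ contModel V χ {ω | Contains H P (toTGraph ω) δ}) ∧
    (∀ β T : ℕ, 0 < β → β < T →
      contModel V ψ {ω | Contains H P (discretize T (toTGraph ω)) (β : ℝ)}
        ≤ contModel V χ {ω | Contains H P (discretize T (toTGraph ω)) (β : ℝ)}) := by
  have := hψ.1
  have := hχ.1
  refine ⟨fun δ _ _ => ?_, fun β T _ _ => ?_⟩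
  · simpa only [relabel_id] using statement11_general H P hP.2.2 ψ χ hdom unif01 measurable_id δ
  · exact statement11_general H P hP.2.2 ψ χ hdom unif01
      (g := fun l => ((⌈(T : ℝ) * l⌉ : ℤ) : ℝ)) (by fun_prop) β

end RTG
end
end

section
/- Let H=(V_H,E_H) be a fixed graph, P a strict partial order on E_H with R(P) linear extensions, ψ a label multiplicity distribution with mean r, 0<δ<1, and 𝒢 a sample from Γ_{[n]}(ψ). Let N_δ be the number of pairs (φ,τ) where φ:V_H→[n] is an injective map and τ assigns to each edge e∈E_H an index τ(e)∈{1,…,l_{φ(e)}} of one of the labels of the edge φ(e) of 𝒢, such that the |E_H| selected labels all lie within an interval of length δ and satisfy X_{φ(uv)} < X_{φ(wx)} whenever uv ≺_P wx. Then E[N_δ] = δ^{|E_H|}·r^{|E_H|}·|V_H|!·(R(P)/|E_H|!)·C(n,|V_H|)·(1 + |E_H|(1−δ)/δ). -/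
open MeasureTheory ProbabilityTheory Filter Set
open scoped ENNReal NNReal Topology

noncomputable section

namespace RTG

/-- The value of the `j`-th sampled label (0-indexed) on the edge `f` in the sample `ω`
(junk value `0` if there are not that many labels). -/
def labVal {V : Type*} (ω : Sym2 V → LabelSpace) (f : Sym2 V) (j : ℕ) : ℝ :=
  if h : j < (ω f).1 then (ω f).2 ⟨j, h⟩ else 0

/-- The set of occurrences of `(H, P)` as a `δ`-temporal motif in the sample `ω`:
pairs of an injective vertex map `φ` and a choice `τ` of a label index for each edge,
such that the selected labels lie within an interval of length `δ` and realize `P`. -/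
def motifOcc {VH : Type*} {n : ℕ} (H : SimpleGraph VH) (P : Sym2 VH → Sym2 VH → Prop)
    (δ : ℝ) (ω : Sym2 (Fin n) → LabelSpace) : Set ((VH → Fin n) × (Sym2 VH → ℕ)) :=
  {p | Function.Injective p.1 ∧ (∀ e, e ∉ H.edgeSet → p.2 e = 0) ∧
    (∀ e ∈ H.edgeSet, p.2 e < (ω (Sym2.map p.1 e)).1) ∧
    (∀ e ∈ H.edgeSet, ∀ f ∈ H.edgeSet,
      labVal ω (Sym2.map p.1 e) (p.2 e) - labVal ω (Sym2.map p.1 f) (p.2 f) ≤ δ) ∧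
    (∀ e f, P e f →
      labVal ω (Sym2.map p.1 e) (p.2 e) < labVal ω (Sym2.map p.1 f) (p.2 f))}

/-- `R(P)`: the number of linear extensions of the strict partial order `P` on the
edge set of `H`, counted as order-preserving bijections onto `Fin |E_H|`. -/
def numLinExtOn {α : Type*} (s : Set α) (P : α → α → Prop) : ℕ :=
  Nat.card {f : s → Fin s.ncard //
    Function.Bijective f ∧ ∀ a b : s, P ↑a ↑b → f a < f b}

/-!
By linearity of expectation, the expected number of occurrences is the sum, over the embeddings `φ`
and the tuples `τ` of label indices, of the probability that `(φ, τ)` is an occurrence. Since `φ`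
sends distinct edges of `H` to distinct edges, this probability is `∏ e, ψ (Ioi (τ e))`, the
probability that the selected labels exist, times the probability that independent uniform labels
on the edges of `H` realize `P` within an interval of length `δ`. The tails of `ψ` sum to its mean,
which yields one factor `r` per edge of `H`, and there are `|V_H|! * C(n, |V_H|)` embeddings.

Being contained in an interval of length `δ` is invariant under permutations of the labels, and
almost surely the labels are distinct, so given this event all `|E_H|!` orders are equally likely
and `P` is realized with conditional probability `R(P) / |E_H|!`. Finally, `m` uniform labels lie
within such an interval with probability `m * ∫ a in 0..1, min δ (1 - a) ^ (m - 1)`: one of them is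
the smallest, with value `a`, and the others have to fall into `[a, a + δ]`.
-/

/-- The tuples indexed by `ι` that realize the relation `P` strictly. -/
def compatibleTuples {ι : Type*} (α : Type*) [LT α] (P : ι → ι → Prop) : Set (ι → α) :=
  {x | ∀ a b, P a b → x a < x b}

/-- The tuples whose entries are sorted strictly by the enumeration `f` of the index set. -/
abbrev rankedTuples {ι : Type*} (α : Type*) [LT α] {m : ℕ} (f : ι ≃ Fin m) : Set (ι → α) :=
  compatibleTuples α fun a b => f a < f b

/-- The linear extensions of the relation `P`, encoded as order-preserving enumerations of the
index set; this type is empty unless `m` is the size of the index set. -/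
def LinearExtension {ι : Type*} (m : ℕ) (P : ι → ι → Prop) :=
  {f : ι ≃ Fin m // ∀ a b, P a b → f a < f b}

section LinearExtension

variable {ι : Type*}

instance [Finite ι] (m : ℕ) (P : ι → ι → Prop) : Finite (LinearExtension m P) :=
  inferInstanceAs (Finite {f : ι ≃ Fin m // ∀ a b, P a b → f a < f b})

lemma card_linearExtension_ncard {β : Type*} (s : Set β) (P : β → β → Prop) :
    Nat.card (LinearExtension s.ncard fun a b : s => P a b) = numLinExtOn s P :=
  Nat.card_congr
    { toFun := fun f => ⟨f.1, f.1.bijective, f.2⟩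
      invFun := fun f => ⟨.ofBijective f.1 f.2.1, f.2.2⟩
      left_inv := fun _ => Subtype.ext (Equiv.ext fun _ => rfl)
      right_inv := fun _ => rfl }

lemma card_linearExtension_bot [Fintype ι] :
    Nat.card (LinearExtension (Fintype.card ι) (⊥ : ι → ι → Prop)) =
      (Fintype.card ι).factorial := by
  classical
  have hall : ∀ f : ι ≃ Fin (Fintype.card ι), ∀ a b, (⊥ : ι → ι → Prop) a b → f a < f b :=
    fun _ _ _ h => h.elim
  rw [LinearExtension, Nat.card_congr (Equiv.subtypeUnivEquiv hall), Nat.card_eq_fintype_card,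
    Fintype.card_equiv (Fintype.equivFin ι)]

end LinearExtension

section RankedTuples

variable {ι α : Type*} [LinearOrder α]

lemma lt_iff_of_mem_rankedTuples {m : ℕ} {f : ι ≃ Fin m} {x : ι → α} (hx : x ∈ rankedTuples α f)
    (a b : ι) : x a < x b ↔ f a < f b := by
  refine ⟨fun h => ?_, hx a b⟩
  rcases lt_trichotomy (f a) (f b) with hab | hab | hab
  · exact hab
  · exact absurd h (f.injective hab ▸ lt_irrefl _)
  · exact absurd h (hx b a hab).not_gt

lemma eq_of_mem_rankedTuples {m : ℕ} {f g : ι ≃ Fin m} {x : ι → α}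
    (hf : x ∈ rankedTuples α f) (hg : x ∈ rankedTuples α g) : f = g := by
  have hmono : StrictMono (f.symm.trans g) := fun i j hij =>
    (lt_iff_of_mem_rankedTuples hg _ _).1 (hf _ _ (by simpa using hij))
  have hid : ⇑(f.symm.trans g) = id := (StrictMono.range_inj hmono strictMono_id).1 (by simp)
  ext a
  simpa using congrArg Fin.val (congrFun hid (f a)).symm

lemma exists_mem_rankedTuples [Fintype ι] {x : ι → α} (hx : Function.Injective x) :
    ∃ f : ι ≃ Fin (Fintype.card ι), x ∈ rankedTuples α f := by
  let _ : LinearOrder ι := LinearOrder.lift' x hx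
  exact ⟨(Fintype.orderIsoFinOfCardEq ι rfl).symm.toEquiv, fun _ _ hab =>
    (Fintype.orderIsoFinOfCardEq ι rfl).symm.lt_iff_lt.1 hab⟩

lemma mem_compatibleTuples_iff_exists_linearExtension [Fintype ι] (P : ι → ι → Prop) {x : ι → α}
    (hx : Function.Injective x) :
    x ∈ compatibleTuples α P ↔
      ∃ f : LinearExtension (Fintype.card ι) P, x ∈ rankedTuples α f.1 := by
  constructor
  · intro hP
    obtain ⟨f, hf⟩ := exists_mem_rankedTuples hx
    exact ⟨⟨f, fun a b hab => (lt_iff_of_mem_rankedTuples hf a b).1 (hP a b hab)⟩, hf⟩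
  · rintro ⟨f, hf⟩ a b hab
    exact hf a b (f.2 a b hab)

lemma measurableSet_compatibleTuples [Countable ι] [TopologicalSpace α] [OrderClosedTopology α]
    [SecondCountableTopology α] [MeasurableSpace α] [OpensMeasurableSpace α] (P : ι → ι → Prop) :
    MeasurableSet (compatibleTuples α P) := by
  simp only [compatibleTuples, Set.ofPred_forall]
  exact .iInter fun a => .iInter fun b => .iInter fun _ =>
    measurableSet_lt (measurable_pi_apply a) (measurable_pi_apply b)

end RankedTuples

section IIDTuples

variable {ι α : Type*} [Fintype ι] [MeasurableSpace α] {μ : Measure α} [IsProbabilityMeasure μ]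

lemma measurePreserving_pi_comp {κ : Type*} [Fintype κ] {g : κ → ι} (hg : Function.Injective g) :
    MeasurePreserving (fun x : ι → α => x ∘ g) (Measure.pi fun _ => μ) (Measure.pi fun _ => μ) := by
  have hindep : iIndepFun (fun k (x : ι → α) => x (g k)) (Measure.pi fun _ => μ) :=
    iIndepFun.precomp hg (iIndepFun_pi (X := fun _ y => y) fun _ => aemeasurable_id)
  refine ⟨by fun_prop, ?_⟩
  calc (Measure.pi fun _ => μ).map (fun x => x ∘ g)
      = Measure.pi fun k => (Measure.pi fun _ => μ).map (Function.eval (g k)) :=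
        (iIndepFun_iff_map_fun_eq_pi_map fun k => (measurable_pi_apply (g k)).aemeasurable).1 hindep
    _ = Measure.pi fun _ => μ := by
        simp_rw [(measurePreserving_eval (fun _ : ι => μ) _).map_eq]

lemma ae_injective_pi [MeasurableEq α] [NullSingletonClass μ] :
    ∀ᵐ x ∂(Measure.pi fun _ : ι => μ), Function.Injective x := by
  have hne : ∀ a b : ι, a ≠ b → ∀ᵐ x ∂(Measure.pi fun _ : ι => μ), x a ≠ x b := by
    intro a b hab
    have hdiag : ∀ᵐ p ∂(μ.prod μ), p.1 ≠ p.2 := by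
      have hnull : (μ.prod μ) (diagonal α) = 0 :=
        (Measure.measure_prod_null measurableSet_diagonal).2 <| .of_forall fun y => by
          simp [diagonal, Set.preimage]
      exact measure_eq_zero_iff_ae_notMem.1 hnull
    have hinj : Function.Injective ![a, b] := by
      simpa [Function.Injective, Fin.forall_fin_two, eq_comm] using hab
    have hpair : MeasurePreserving (fun x : ι → α => (x a, x b)) (Measure.pi fun _ => μ)
        (μ.prod μ) :=
      (measurePreserving_finTwoArrow μ).comp
        (measurePreserving_pi_comp (g := ![a, b]) hinj)
    exact hpair.quasiMeasurePreserving.ae hdiag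
  have hall : ∀ᵐ x ∂(Measure.pi fun _ : ι => μ), ∀ a b, a ≠ b → x a ≠ x b :=
    ae_all_iff.2 fun a => ae_all_iff.2 fun b => eventually_imp_distrib_left.2 (hne a b)
  filter_upwards [hall] with x hx a b hab
  by_contra h
  exact hx a b h hab

variable [LinearOrder α] [TopologicalSpace α] [OrderClosedTopology α] [SecondCountableTopology α]
  [OpensMeasurableSpace α]

lemma measureReal_inter_rankedTuples_eq {S : Set (ι → α)} (hS : MeasurableSet S)
    (hperm : ∀ σ : Equiv.Perm ι, ∀ x, x ∘ σ ∈ S ↔ x ∈ S) {m : ℕ} (f g : ι ≃ Fin m) :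
    (Measure.pi fun _ => μ).real (S ∩ rankedTuples α f) =
      (Measure.pi fun _ => μ).real (S ∩ rankedTuples α g) := by
  let σ : Equiv.Perm ι := g.trans f.symm
  have hpre : (fun x : ι → α => x ∘ σ) ⁻¹' (S ∩ rankedTuples α g) = S ∩ rankedTuples α f := by
    ext x
    refine and_congr (hperm σ x) ⟨fun hx a b hab => ?_, fun hx a b hab => hx _ _ (by simpa [σ])⟩
    simpa [σ] using hx (g.symm (f a)) (g.symm (f b)) (by simpa)
  rw [← hpre, (measurePreserving_pi_comp σ.injective).measureReal_preimage
    (hS.inter (measurableSet_compatibleTuples _)).nullMeasurableSet]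

variable [NullSingletonClass μ]

lemma measureReal_inter_compatibleTuples_eq_card_mul {S : Set (ι → α)} (hS : MeasurableSet S)
    (hperm : ∀ σ : Equiv.Perm ι, ∀ x, x ∘ σ ∈ S ↔ x ∈ S) (P : ι → ι → Prop)
    (f₀ : ι ≃ Fin (Fintype.card ι)) :
    (Measure.pi fun _ => μ).real (S ∩ compatibleTuples α P) =
      Nat.card (LinearExtension (Fintype.card ι) P) *
        (Measure.pi fun _ => μ).real (S ∩ rankedTuples α f₀) := by
  have := Fintype.ofFinite (LinearExtension (Fintype.card ι) P)
  have hunion : (S ∩ compatibleTuples α P : Set (ι → α)) =ᵐ[Measure.pi fun _ => μ]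
      ⋃ f : LinearExtension (Fintype.card ι) P, S ∩ rankedTuples α f.1 := by
    rw [← Set.inter_iUnion]
    filter_upwards [ae_injective_pi] with x hx
    exact propext (and_congr_right fun _ => by
      simpa only [Set.mem_iUnion] using mem_compatibleTuples_iff_exists_linearExtension P hx)
  have hdisj : Pairwise (Function.onFun Disjoint fun f : LinearExtension (Fintype.card ι) P =>
      S ∩ rankedTuples α f.1) := fun f g hfg =>
    Set.disjoint_left.2 fun _ hf hg => hfg (Subtype.ext (eq_of_mem_rankedTuples hf.2 hg.2))
  rw [measureReal_congr hunion, measureReal_iUnion_fintype hdisj fun f =>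
    hS.inter (measurableSet_compatibleTuples _)]
  simp [fun f : LinearExtension (Fintype.card ι) P =>
    measureReal_inter_rankedTuples_eq (μ := μ) hS hperm f.1 f₀]

theorem measureReal_inter_compatibleTuples {S : Set (ι → α)} (hS : MeasurableSet S)
    (hperm : ∀ σ : Equiv.Perm ι, ∀ x, x ∘ σ ∈ S ↔ x ∈ S) (P : ι → ι → Prop) :
    (Measure.pi fun _ => μ).real (S ∩ compatibleTuples α P) =
      Nat.card (LinearExtension (Fintype.card ι) P) / (Fintype.card ι).factorial *
        (Measure.pi fun _ => μ).real S := by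
  have hbot := measureReal_inter_compatibleTuples_eq_card_mul (μ := μ) hS hperm ⊥
    (Fintype.equivFin ι)
  have huniv : compatibleTuples α (⊥ : ι → ι → Prop) = univ :=
    Set.eq_univ_of_forall fun _ _ _ h => h.elim
  rw [huniv, Set.inter_univ, card_linearExtension_bot] at hbot
  rw [measureReal_inter_compatibleTuples_eq_card_mul hS hperm P (Fintype.equivFin ι), hbot]
  field_simp

end IIDTuples

/-- The real tuples indexed by `ι` all of whose entries lie within an interval of length `δ`. -/
def narrowTuples (ι : Type*) (δ : ℝ) : Set (ι → ℝ) := {x | ∀ a b, x a - x b ≤ δ}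

/-- The tuples whose minimum is attained at the index `i` and all of whose entries exceed it by
at most `δ`. -/
def narrowTuplesAbove {m : ℕ} (i : Fin (m + 1)) (δ : ℝ) : Set (Fin (m + 1) → ℝ) :=
  {x | ∀ j, x (i.succAbove j) ∈ Icc (x i) (x i + δ)}

section NarrowTuples

variable {ι : Type*} {δ : ℝ}

lemma comp_perm_mem_narrowTuples (σ : Equiv.Perm ι) (x : ι → ℝ) :
    x ∘ σ ∈ narrowTuples ι δ ↔ x ∈ narrowTuples ι δ :=
  ⟨fun hx a b => by simpa using hx (σ.symm a) (σ.symm b), fun hx a b => hx (σ a) (σ b)⟩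

lemma measurableSet_narrowTuples [Countable ι] : MeasurableSet (narrowTuples ι δ) := by
  simp only [narrowTuples, Set.ofPred_forall]
  exact .iInter fun a => .iInter fun b => measurableSet_le
    ((measurable_pi_apply a).sub (measurable_pi_apply b)) measurable_const

lemma measurableSet_mem_Icc_add {β : Type*} [MeasurableSpace β] {f g : β → ℝ} (hf : Measurable f)
    (hg : Measurable g) : MeasurableSet {b | g b ∈ Icc (f b) (f b + δ)} :=
  (measurableSet_le hf hg).inter (measurableSet_le hg (hf.add_const δ))

variable {m : ℕ}

lemma measurableSet_narrowTuplesAbove (i : Fin (m + 1)) :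
    MeasurableSet (narrowTuplesAbove i δ) := by
  simp only [narrowTuplesAbove, Set.ofPred_forall]
  exact .iInter fun j => measurableSet_mem_Icc_add (measurable_pi_apply _) (measurable_pi_apply _)

lemma le_of_mem_narrowTuplesAbove {i : Fin (m + 1)} {x : Fin (m + 1) → ℝ}
    (hx : x ∈ narrowTuplesAbove i δ) (j : Fin (m + 1)) : x i ≤ x j := by
  rcases eq_or_ne j i with rfl | hj
  · exact le_rfl
  · obtain ⟨k, rfl⟩ := Fin.exists_succAbove_eq hj
    exact (hx k).1

lemma iUnion_narrowTuplesAbove (hδ : 0 ≤ δ) :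
    ⋃ i : Fin (m + 1), narrowTuplesAbove i δ = narrowTuples (Fin (m + 1)) δ := by
  ext x
  rw [Set.mem_iUnion]
  constructor
  · rintro ⟨i, hx⟩ a b
    have hle : x a ≤ x i + δ := by
      rcases eq_or_ne a i with rfl | ha
      · linarith
      · obtain ⟨k, rfl⟩ := Fin.exists_succAbove_eq ha
        exact (hx k).2
    linarith [le_of_mem_narrowTuplesAbove hx b]
  · intro hx
    obtain ⟨i, hi⟩ := Finite.exists_min x
    exact ⟨i, fun j => ⟨hi _, by linarith [hx (i.succAbove j) i]⟩⟩

variable {μ : Measure ℝ} [IsProbabilityMeasure μ]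

lemma measure_pi_narrowTuplesAbove (i : Fin (m + 1)) :
    (Measure.pi fun _ => μ) (narrowTuplesAbove i δ) = ∫⁻ a, μ (Icc a (a + δ)) ^ m ∂μ := by
  let T : Set (ℝ × (Fin m → ℝ)) := {p | ∀ j, p.2 j ∈ Icc p.1 (p.1 + δ)}
  have hT : MeasurableSet T := by
    simp only [T, Set.ofPred_forall]
    exact .iInter fun j => measurableSet_mem_Icc_add (by fun_prop) (by fun_prop)
  have hsplit := measurePreserving_piFinSuccAbove (fun _ : Fin (m + 1) => μ) i
  have hslice : ∀ a, Prod.mk a ⁻¹' T = Set.univ.pi fun _ => Icc a (a + δ) := fun a => by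
    ext x
    simp only [T, Set.mem_preimage, Set.mem_ofPred_eq, Set.mem_univ_pi]
  calc (Measure.pi fun _ => μ) (narrowTuplesAbove i δ)
      = (μ.prod (Measure.pi fun _ => μ)) T := hsplit.measure_preimage hT.nullMeasurableSet
    _ = ∫⁻ a, μ (Icc a (a + δ)) ^ m ∂μ := by
        simp_rw [Measure.prod_apply hT, hslice, Measure.pi_pi, Finset.prod_const,
          Finset.card_univ, Fintype.card_fin]

lemma aedisjoint_narrowTuplesAbove [NullSingletonClass μ] :
    Pairwise (Function.onFun (AEDisjoint (Measure.pi fun _ => μ))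
      fun i : Fin (m + 1) => narrowTuplesAbove i δ) := by
  intro i j hij
  refine measure_mono_null (fun x hx => ?_)
    (ae_iff.1 (ae_injective_pi (ι := Fin (m + 1)) (μ := μ)))
  exact fun hinj => hij <| hinj <| le_antisymm (le_of_mem_narrowTuplesAbove hx.1 j)
    (le_of_mem_narrowTuplesAbove hx.2 i)

theorem measureReal_pi_narrowTuples_succ [NullSingletonClass μ] (hδ : 0 ≤ δ) :
    (Measure.pi fun _ => μ).real (narrowTuples (Fin (m + 1)) δ) =
      (m + 1) * ∫ a, μ.real (Icc a (a + δ)) ^ m ∂μ := by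
  have hmeas : Measurable fun a => μ (Icc a (a + δ)) :=
    measurable_measure_prodMk_left (ν := μ)
      (measurableSet_mem_Icc_add measurable_fst measurable_snd)
  have hint : ∫ a, μ.real (Icc a (a + δ)) ^ m ∂μ = (∫⁻ a, μ (Icc a (a + δ)) ^ m ∂μ).toReal := by
    simp_rw [measureReal_def, ← ENNReal.toReal_pow]
    exact integral_toReal (hmeas.pow_const m).aemeasurable (.of_forall fun a => by finiteness)
  rw [hint, measureReal_def, ← iUnion_narrowTuplesAbove hδ,
    measure_iUnion₀ aedisjoint_narrowTuplesAbove fun i =>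
      (measurableSet_narrowTuplesAbove i).nullMeasurableSet]
  simp [measure_pi_narrowTuplesAbove, ENNReal.toReal_add]

end NarrowTuples

section Unif01

instance : IsProbabilityMeasure unif01 := ⟨by simp [unif01]⟩

instance : NullSingletonClass unif01 := inferInstanceAs (NullSingletonClass (volume.restrict _))

variable {δ : ℝ}

lemma measureReal_unif01_Icc_add (hδ : 0 ≤ δ) {a : ℝ} (ha : a ∈ Ioc (0 : ℝ) 1) :
    unif01.real (Icc a (a + δ)) = min δ (1 - a) := by
  have hinter : Icc a (a + δ) ∩ Ioc 0 1 = Icc a (min (a + δ) 1) := by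
    ext y
    simp only [Set.mem_inter_iff, Set.mem_Icc, Set.mem_Ioc, le_min_iff]
    exact ⟨fun h => ⟨h.1.1, h.1.2, h.2.2⟩, fun h => ⟨⟨h.1, h.2.1⟩, ha.1.trans_le h.1, h.2.2⟩⟩
  rw [unif01, measureReal_restrict_apply measurableSet_Icc, hinter,
    Real.volume_real_Icc_of_le (le_min (by linarith) ha.2), ← min_sub_sub_right,
    add_sub_cancel_left]

lemma integral_unif01_measureReal_Icc_add_pow (hδ : 0 ≤ δ) (hδ1 : δ ≤ 1) (m : ℕ) :
    ∫ a, unif01.real (Icc a (a + δ)) ^ m ∂unif01 =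
      (1 - δ) * δ ^ m + δ ^ (m + 1) / (m + 1) := by
  have hcont : Continuous fun a : ℝ => min δ (1 - a) ^ m := by fun_prop
  have hleft : ∫ a in (0 : ℝ)..(1 - δ), min δ (1 - a) ^ m = (1 - δ) * δ ^ m := by
    rw [intervalIntegral.integral_congr (g := fun _ => δ ^ m) fun a ha => ?_]
    · simp
    · rw [Set.uIcc_of_le (by linarith)] at ha
      simp only [min_eq_left (show δ ≤ 1 - a by linarith [ha.2])]
  have hright : ∫ a in (1 - δ)..1, min δ (1 - a) ^ m = δ ^ (m + 1) / (m + 1) := by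
    rw [intervalIntegral.integral_congr (g := fun a => (1 - a) ^ m) fun a ha => ?_]
    · simp [intervalIntegral.integral_comp_sub_left fun a => a ^ m]
    · rw [Set.uIcc_of_le (by linarith)] at ha
      simp only [min_eq_right (show 1 - a ≤ δ by linarith [ha.1])]
  calc ∫ a, unif01.real (Icc a (a + δ)) ^ m ∂unif01
      = ∫ a in Ioc 0 1, min δ (1 - a) ^ m :=
        setIntegral_congr_fun measurableSet_Ioc fun a ha => by
          simp only [measureReal_unif01_Icc_add hδ ha]
    _ = (∫ a in (0 : ℝ)..(1 - δ), min δ (1 - a) ^ m) + ∫ a in (1 - δ)..1, min δ (1 - a) ^ m := by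
        rw [← intervalIntegral.integral_of_le zero_le_one,
          intervalIntegral.integral_add_adjacent_intervals (hcont.intervalIntegrable _ _)
            (hcont.intervalIntegrable _ _)]
    _ = (1 - δ) * δ ^ m + δ ^ (m + 1) / (m + 1) := by rw [hleft, hright]

theorem measureReal_pi_unif01_narrowTuples (ι : Type*) [Fintype ι] (hδ : 0 < δ) (hδ1 : δ ≤ 1) :
    (Measure.pi fun _ => unif01).real (narrowTuples ι δ) =
      δ ^ Fintype.card ι * (1 + Fintype.card ι * (1 - δ) / δ) := by
  have hpre : (fun x : ι → ℝ => x ∘ (Fintype.equivFin ι).symm) ⁻¹' narrowTuples _ δ =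
      narrowTuples ι δ := by
    ext x
    exact (Fintype.equivFin ι).symm.forall_congr_left.trans <| by
      simp [narrowTuples, (Fintype.equivFin ι).symm.forall_congr_left]
  rw [← hpre, (measurePreserving_pi_comp (Fintype.equivFin ι).symm.injective).measureReal_preimage
    measurableSet_narrowTuples.nullMeasurableSet]
  cases Fintype.card ι with
  | zero => simp [narrowTuples]
  | succ m =>
    rw [measureReal_pi_narrowTuples_succ hδ.le, integral_unif01_measureReal_Icc_add_pow hδ.le hδ1]
    push_cast
    field_simp
    ring

end Unif01

/-- The label data of an edge carrying the `k`-tuple `x` of labels: the inclusion of the `k`-th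
summand of `LabelSpace`. -/
abbrev ofLabels (k : ℕ) (x : Fin k → ℝ) : LabelSpace := ⟨k, x⟩

/-- The value of the `t`-th label (0-indexed) in the label data `x` of a single edge, with junk
value `0` if there are at most `t` labels; thus `labVal ω e t` unfolds to `labelAt t (ω e)`. -/
def labelAt (t : ℕ) (x : LabelSpace) : ℝ := if h : t < x.1 then x.2 ⟨t, h⟩ else 0

/-- The event that, for each index `i`, the `τ i`-th label of the edge `g i` exists and that the
tuple of labels so selected lies in `B`. -/
def selectionEvent {ι W : Type*} (g : ι → W) (τ : ι → ℕ) (B : Set (ι → ℝ)) :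
    Set (W → LabelSpace) :=
  {ω | (∀ i, τ i < (ω (g i)).1) ∧ (fun i => labelAt (τ i) (ω (g i))) ∈ B}

section EdgeMeasure

lemma measurable_ofLabels (k : ℕ) : Measurable (ofLabels k) :=
  fun _ hs => MeasurableSpace.measurableSet_iInf.1 hs k

lemma measurable_of_forall_comp_ofLabels {β : Type*} [MeasurableSpace β] {f : LabelSpace → β}
    (hf : ∀ k, Measurable fun x => f (ofLabels k x)) : Measurable f :=
  fun _ hs => MeasurableSpace.measurableSet_iInf.2 fun k => hf k hs

lemma measurable_labelAt (t : ℕ) : Measurable (labelAt t) :=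
  measurable_of_forall_comp_ofLabels fun k => by
    by_cases h : t < k
    · simp only [ofLabels, labelAt, h, dite_true]
      exact measurable_pi_apply (X := fun _ : Fin k => ℝ) ⟨t, h⟩
    · simp only [ofLabels, labelAt, h, dite_false, measurable_const]

lemma measurableSet_lt_labelCount (t : ℕ) : MeasurableSet {x : LabelSpace | t < x.1} :=
  measurableSet_lt measurable_const (measurable_of_forall_comp_ofLabels fun _ => measurable_const)

lemma edgeMeasure_apply (ν : Measure ℝ) (ψ : Measure ℕ) {A : Set LabelSpace}
    (hA : MeasurableSet A) :
    edgeMeasure ν ψ A = ∑' k, ψ {k} * (Measure.pi fun _ : Fin k => ν) (ofLabels k ⁻¹' A) := by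
  simp_rw [edgeMeasure, Measure.sum_apply _ hA, Measure.smul_apply,
    Measure.map_apply (measurable_ofLabels _) hA, smul_eq_mul]

variable (ν : Measure ℝ) [IsProbabilityMeasure ν] (ψ : Measure ℕ)

instance [IsProbabilityMeasure ψ] : IsProbabilityMeasure (edgeMeasure ν ψ) where
  measure_univ := by
    have hsum := Measure.tsum_indicator_apply_singleton ψ univ .univ
    simpa [edgeMeasure_apply ν ψ .univ] using hsum

lemma map_labelAt_restrict_edgeMeasure (t : ℕ) :
    ((edgeMeasure ν ψ).restrict {x | t < x.1}).map (labelAt t) = ψ (Ioi t) • ν := by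
  ext A hA
  have hslice : ∀ k, ψ {k} * (Measure.pi fun _ : Fin k => ν)
      (ofLabels k ⁻¹' (labelAt t ⁻¹' A ∩ {x | t < x.1})) =
        (Ioi t).indicator (fun k => ψ {k}) k * ν A := by
    intro k
    by_cases h : t < k
    · have hpre : ofLabels k ⁻¹' (labelAt t ⁻¹' A ∩ {x | t < x.1}) =
          Function.eval (⟨t, h⟩ : Fin k) ⁻¹' A := by
        ext x
        simp [labelAt, h]
      rw [hpre, (measurePreserving_eval (fun _ : Fin k => ν) ⟨t, h⟩).measure_preimage
        hA.nullMeasurableSet, Set.indicator_of_mem (Set.mem_Ioi.2 h)]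
    · have hpre : ofLabels k ⁻¹' (labelAt t ⁻¹' A ∩ {x | t < x.1}) = ∅ := by
        ext x
        simp [h]
      rw [hpre, Set.indicator_of_notMem (by simpa using h), measure_empty, mul_zero, zero_mul]
  rw [Measure.map_apply (measurable_labelAt t) hA,
    Measure.restrict_apply (measurable_labelAt t hA),
    edgeMeasure_apply ν ψ ((measurable_labelAt t hA).inter (measurableSet_lt_labelCount t)),
    tsum_congr hslice, ENNReal.tsum_mul_right,
    Measure.tsum_indicator_apply_singleton ψ _ .of_discrete, Measure.smul_apply, smul_eq_mul]

end EdgeMeasure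

section Selection

variable {ι W : Type*}

lemma measurableSet_selectionEvent [Countable ι] (g : ι → W) (τ : ι → ℕ) {B : Set (ι → ℝ)}
    (hB : MeasurableSet B) : MeasurableSet (selectionEvent g τ B) := by
  have hexists : MeasurableSet {ω : W → LabelSpace | ∀ i, τ i < (ω (g i)).1} := by
    rw [Set.ofPred_forall]
    exact .iInter fun i => (measurableSet_lt_labelCount (τ i)).preimage (measurable_pi_apply (g i))
  exact hexists.inter <| hB.preimage <|
    measurable_pi_lambda _ fun i => (measurable_labelAt (τ i)).comp (measurable_pi_apply (g i))

variable [Fintype ι]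

lemma measure_pi_smul {α : ι → Type*} [∀ i, MeasurableSpace (α i)] (ν : ∀ i, Measure (α i))
    [∀ i, SigmaFinite (ν i)] (c : ι → ℝ≥0∞) (hc : ∀ i, c i ≠ ∞) :
    (Measure.pi fun i => c i • ν i) = (∏ i, c i) • Measure.pi ν := by
  have hσ : ∀ i, SigmaFinite (c i • ν i) := fun i => by
    lift c to ι → ℝ≥0 using hc
    exact inferInstanceAs (SigmaFinite (c i • ν i))
  exact Measure.pi_eq fun s _ => by simp [Measure.pi_pi, Finset.prod_mul_distrib]

variable [Fintype W] {ν : Measure ℝ} [IsProbabilityMeasure ν] {ψ : Measure ℕ}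
  [IsProbabilityMeasure ψ]

lemma measure_selectionEvent_id (τ : ι → ℕ) {B : Set (ι → ℝ)} (hB : MeasurableSet B) :
    (Measure.pi fun _ => edgeMeasure ν ψ) (selectionEvent id τ B) =
      (∏ i, ψ (Ioi (τ i))) * (Measure.pi fun _ => ν) B := by
  have hmeas : Measurable fun (x : ι → LabelSpace) i => labelAt (τ i) (x i) :=
    measurable_pi_lambda _ fun i => (measurable_labelAt (τ i)).comp (measurable_pi_apply i)
  have hσ : ∀ i, SigmaFinite
      (((edgeMeasure ν ψ).restrict {x | τ i < x.1}).map (labelAt (τ i))) := fun i => by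
    rw [map_labelAt_restrict_edgeMeasure]
    have := Measure.smul_finite ν (measure_ne_top ψ (Ioi (τ i)))
    infer_instance
  calc (Measure.pi fun _ => edgeMeasure ν ψ) (selectionEvent id τ B)
      = ((Measure.pi fun _ => edgeMeasure ν ψ).restrict
          (Set.univ.pi fun i => {x : LabelSpace | τ i < x.1})).map
          (fun x i => labelAt (τ i) (x i)) B := by
        rw [Measure.map_apply hmeas hB, Measure.restrict_apply (hmeas hB)]
        congr 1
        ext x
        simp [selectionEvent, and_comm]
    _ = (Measure.pi fun i => ψ (Ioi (τ i)) • ν) B := by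
        rw [Measure.restrict_pi_pi,
          Measure.pi_map_pi fun i => (measurable_labelAt (τ i)).aemeasurable]
        simp_rw [map_labelAt_restrict_edgeMeasure]
    _ = (∏ i, ψ (Ioi (τ i))) * (Measure.pi fun _ => ν) B := by
        rw [measure_pi_smul _ _ fun i => measure_ne_top _ _, Measure.smul_apply, smul_eq_mul]

theorem measure_selectionEvent {g : ι → W} (hg : Function.Injective g) (τ : ι → ℕ)
    {B : Set (ι → ℝ)} (hB : MeasurableSet B) :
    (Measure.pi fun _ => edgeMeasure ν ψ) (selectionEvent g τ B) =
      (∏ i, ψ (Ioi (τ i))) * (Measure.pi fun _ => ν) B := by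
  rw [← measure_selectionEvent_id τ hB, ← (measurePreserving_pi_comp hg).measure_preimage
    (measurableSet_selectionEvent id τ hB).nullMeasurableSet]
  rfl

end Selection

section TsumProd

variable {κ : Type*}

lemma tsum_fin_prod_eq_prod_tsum {m : ℕ} (f : Fin m → κ → ℝ≥0∞) :
    ∑' τ : Fin m → κ, ∏ i, f i (τ i) = ∏ i, ∑' k, f i k := by
  induction m with
  | zero => simp [tsum_fintype]
  | succ m ih =>
    rw [← (Fin.consEquiv fun _ => κ).tsum_eq, ENNReal.tsum_prod', Fin.prod_univ_succ, ← ih,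
      ← ENNReal.tsum_mul_right]
    simp_rw [← ENNReal.tsum_mul_left]
    simp [Fin.consEquiv, Fin.prod_univ_succ]

lemma tsum_prod_eq_prod_tsum {ι : Type*} [Fintype ι] (f : ι → κ → ℝ≥0∞) :
    ∑' τ : ι → κ, ∏ i, f i (τ i) = ∏ i, ∑' k, f i k := by
  let e := Fintype.equivFin ι
  rw [← (Equiv.arrowCongr e (Equiv.refl κ)).symm.tsum_eq, ← e.symm.prod_comp fun i => ∑' k, f i k,
    ← tsum_fin_prod_eq_prod_tsum]
  refine tsum_congr fun τ => ?_
  simp [← e.symm.prod_comp]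

end TsumProd

section Counting

lemma coe_encard_eq_tsum_indicator {Ω ι : Type*} (S : Ω → Set ι) (ω : Ω) :
    ((S ω).encard : ℝ≥0∞) = ∑' i, {ω | i ∈ S ω}.indicator 1 ω := by
  rw [← ENNReal.tsum_set_one, tsum_subtype (S ω) fun _ => (1 : ℝ≥0∞)]
  rfl

variable {Ω ι : Type*} [MeasurableSpace Ω] {μ : Measure Ω} [Countable ι] {S : Ω → Set ι}

lemma measurable_encard (hS : ∀ i, MeasurableSet {ω | i ∈ S ω}) :
    Measurable fun ω => ((S ω).encard : ℝ≥0∞) := by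
  simp_rw [coe_encard_eq_tsum_indicator]
  exact Measurable.tsum fun i => measurable_one.indicator (hS i)

lemma lintegral_encard (hS : ∀ i, MeasurableSet {ω | i ∈ S ω}) :
    ∫⁻ ω, (S ω).encard ∂μ = ∑' i, μ {ω | i ∈ S ω} := by
  simp_rw [coe_encard_eq_tsum_indicator,
    lintegral_tsum fun i => (measurable_one.indicator (hS i)).aemeasurable,
    lintegral_indicator_one (hS _)]

lemma integral_ncard (hS : ∀ i, MeasurableSet {ω | i ∈ S ω})
    (hfin : ∑' i, μ {ω | i ∈ S ω} ≠ ∞) :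
    ∫ ω, ((S ω).ncard : ℝ) ∂μ = (∑' i, μ {ω | i ∈ S ω}).toReal := by
  have hcast : ∀ ω, ((S ω).ncard : ℝ) = ((S ω).encard : ℝ≥0∞).toReal := fun ω => by
    rw [Set.ncard_def]
    cases (S ω).encard <;> simp
  rw [← lintegral_encard hS] at hfin ⊢
  simp_rw [hcast]
  exact integral_toReal (measurable_encard hS).aemeasurable
    (ae_lt_top (measurable_encard hS) hfin)

lemma tsum_measure_Ioi (ψ : Measure ℕ) :
    ∑' t, ψ (Ioi t) = ∫⁻ k, (k : ℝ≥0∞) ∂ψ := by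
  have hcard : ∀ k : ℕ, ((Iio k).encard : ℝ≥0∞) = k := fun k => by
    simp [Set.encard_eq_coe_toFinset_card]
  simp_rw [← hcard]
  exact (lintegral_encard fun _ => .of_discrete).symm

lemma toReal_lintegral_natCast_eq_lmdMean (ψ : Measure ℕ) :
    (∫⁻ k, (k : ℝ≥0∞) ∂ψ).toReal = lmdMean ψ := by
  rw [← integral_toReal (measurable_of_countable _).aemeasurable
    (.of_forall fun k => ENNReal.natCast_lt_top k)]
  simp [lmdMean]

end Counting

theorem tsum_measure_selectionEvent {ι W : Type*} [Fintype ι] [Fintype W] {ν : Measure ℝ}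
    [IsProbabilityMeasure ν] {ψ : Measure ℕ} [IsProbabilityMeasure ψ] {g : ι → W}
    (hg : Function.Injective g) {B : Set (ι → ℝ)} (hB : MeasurableSet B) :
    ∑' τ, (Measure.pi fun _ => edgeMeasure ν ψ) (selectionEvent g τ B) =
      (∫⁻ k, (k : ℝ≥0∞) ∂ψ) ^ Fintype.card ι * (Measure.pi fun _ => ν) B := by
  simp_rw [measure_selectionEvent hg _ hB, ENNReal.tsum_mul_right,
    tsum_prod_eq_prod_tsum fun _ t => ψ (Ioi t), tsum_measure_Ioi, Finset.prod_const,
    Finset.card_univ]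

/-- The label tuples on the edges of `H` that realize `P` within an interval of length `δ`. -/
def motifTuples {VH : Type*} (H : SimpleGraph VH) (P : Sym2 VH → Sym2 VH → Prop) (δ : ℝ) :
    Set (H.edgeSet → ℝ) :=
  narrowTuples H.edgeSet δ ∩ compatibleTuples ℝ fun a b => P a b

/-- The encoding used by `motifOcc` of an embedding of the vertices together with a choice of label
indices on the edges of `H`: the indices are extended by `0` to all unordered pairs. -/
def occurrenceOf {VH V : Type*} (H : SimpleGraph VH) (q : (VH ↪ V) × (H.edgeSet → ℕ)) :
    (VH → V) × (Sym2 VH → ℕ) :=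
  (q.1, Function.extend Subtype.val q.2 0)

/-- The event that the embedding and the label indices recorded by `q` form an occurrence of
`(H, P)` as a `δ`-temporal motif. -/
def occurrenceEvent {VH V : Type*} (H : SimpleGraph VH) (P : Sym2 VH → Sym2 VH → Prop) (δ : ℝ)
    (q : (VH ↪ V) × (H.edgeSet → ℕ)) : Set (Sym2 V → LabelSpace) :=
  selectionEvent (fun e : H.edgeSet => Sym2.map q.1 e) q.2 (motifTuples H P δ)

section Motif

variable {VH : Type*} {H : SimpleGraph VH} {P : Sym2 VH → Sym2 VH → Prop} {δ : ℝ} {n : ℕ}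

lemma occurrenceOf_injective {V : Type*} :
    Function.Injective (occurrenceOf (V := V) H) := fun _ _ h =>
  Prod.ext (DFunLike.coe_injective (congrArg Prod.fst h))
    (Function.extend_injective Subtype.val_injective (0 : Sym2 VH → ℕ) (congrArg Prod.snd h))

lemma occurrenceOf_snd_apply {V : Type*} (q : (VH ↪ V) × (H.edgeSet → ℕ)) (e : H.edgeSet) :
    (occurrenceOf H q).2 e = q.2 e :=
  Subtype.val_injective.extend_apply _ _ _

lemma occurrenceOf_mem_motifOcc_iff (hP : ∀ e f, P e f → e ∈ H.edgeSet ∧ f ∈ H.edgeSet)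
    (ω : Sym2 (Fin n) → LabelSpace) (q : (VH ↪ Fin n) × (H.edgeSet → ℕ)) :
    occurrenceOf H q ∈ motifOcc H P δ ω ↔ ω ∈ occurrenceEvent H P δ q := by
  have hlab : ∀ e : H.edgeSet, labVal ω (Sym2.map (occurrenceOf H q).1 e) ((occurrenceOf H q).2 e) =
      labelAt (q.2 e) (ω (Sym2.map q.1 e)) := fun e => by
    rw [occurrenceOf_snd_apply]
    rfl
  constructor
  · rintro ⟨-, -, hexists, hnarrow, hcompat⟩
    refine ⟨fun e => occurrenceOf_snd_apply q e ▸ hexists e e.2, fun a b => ?_, fun a b hab => ?_⟩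
    · simpa only [hlab] using hnarrow a a.2 b b.2
    · simpa only [hlab] using hcompat a b hab
  · rintro ⟨hexists, hnarrow, hcompat⟩
    refine ⟨q.1.injective, fun e he => ?_, fun e he => ?_, fun e he f hf => ?_, fun e f hef => ?_⟩
    · exact Function.extend_apply' _ _ _ fun ⟨a, ha⟩ => he (ha ▸ a.2)
    · exact (occurrenceOf_snd_apply q ⟨e, he⟩).trans_lt (hexists ⟨e, he⟩)
    · exact (hlab ⟨e, he⟩).symm ▸ (hlab ⟨f, hf⟩).symm ▸ hnarrow ⟨e, he⟩ ⟨f, hf⟩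
    · obtain ⟨he, hf⟩ := hP e f hef
      exact (hlab ⟨e, he⟩).symm ▸ (hlab ⟨f, hf⟩).symm ▸ hcompat ⟨e, he⟩ ⟨f, hf⟩ hef

lemma motifOcc_subset_range_occurrenceOf (ω : Sym2 (Fin n) → LabelSpace) :
    motifOcc H P δ ω ⊆ range (occurrenceOf H) := by
  rintro ⟨φ, τ⟩ ⟨hφ, hτ, -⟩
  refine ⟨(⟨φ, hφ⟩, fun e => τ e), Prod.ext rfl (funext fun e => ?_)⟩
  by_cases he : e ∈ H.edgeSet
  · exact occurrenceOf_snd_apply _ ⟨e, he⟩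
  · exact (Function.extend_apply' _ _ _ fun ⟨a, ha⟩ => he (ha ▸ a.2)).trans (hτ e he).symm

lemma ncard_motifOcc (hP : ∀ e f, P e f → e ∈ H.edgeSet ∧ f ∈ H.edgeSet)
    (ω : Sym2 (Fin n) → LabelSpace) :
    (motifOcc H P δ ω).ncard = {q | ω ∈ occurrenceEvent H P δ q}.ncard := by
  simp_rw [← occurrenceOf_mem_motifOcc_iff hP]
  exact (Set.ncard_preimage_of_injective_subset_range occurrenceOf_injective
    (motifOcc_subset_range_occurrenceOf ω)).symm

lemma measurableSet_motifTuples [Countable H.edgeSet] :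
    MeasurableSet (motifTuples H P δ) :=
  measurableSet_narrowTuples.inter (measurableSet_compatibleTuples _)

lemma measurableSet_occurrenceEvent [Countable H.edgeSet] {V : Type*}
    (q : (VH ↪ V) × (H.edgeSet → ℕ)) :
    MeasurableSet (occurrenceEvent H P δ q) :=
  measurableSet_selectionEvent _ _ measurableSet_motifTuples

variable [Fintype H.edgeSet]

lemma measureReal_pi_unif01_motifTuples (hδ : 0 < δ) (hδ1 : δ ≤ 1) :
    (Measure.pi fun _ => unif01).real (motifTuples H P δ) =
      numLinExtOn H.edgeSet P / H.edgeSet.ncard.factorial *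
        (δ ^ H.edgeSet.ncard * (1 + H.edgeSet.ncard * (1 - δ) / δ)) := by
  classical
  rw [motifTuples, measureReal_inter_compatibleTuples measurableSet_narrowTuples
    comp_perm_mem_narrowTuples, measureReal_pi_unif01_narrowTuples _ hδ hδ1,
    Set.fintypeCard_eq_ncard, card_linearExtension_ncard]

variable [Fintype VH] (ν : Measure ℝ) [IsProbabilityMeasure ν] (ψ : Measure ℕ)
  [IsProbabilityMeasure ψ]

lemma tsum_measure_occurrenceEvent {V : Type*} [Fintype V] [DecidableEq V] :
    ∑' q, model V ν ψ (occurrenceEvent H P δ q) =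
      (Fintype.card V).descFactorial (Fintype.card VH) * ((∫⁻ k, (k : ℝ≥0∞) ∂ψ) ^ H.edgeSet.ncard *
        (Measure.pi fun _ => ν) (motifTuples H P δ)) := by
  classical
  have hinj : ∀ φ : VH ↪ V, Function.Injective fun e : H.edgeSet => Sym2.map φ e :=
    fun φ => (Sym2.map.injective φ.injective).comp Subtype.val_injective
  have hfiber : ∀ φ : VH ↪ V, ∑' τ, model V ν ψ (occurrenceEvent H P δ (φ, τ)) =
      (∫⁻ k, (k : ℝ≥0∞) ∂ψ) ^ H.edgeSet.ncard * (Measure.pi fun _ => ν) (motifTuples H P δ) :=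
    fun φ => by
      rw [← Set.fintypeCard_eq_ncard]
      exact tsum_measure_selectionEvent (hinj φ) measurableSet_motifTuples
  rw [ENNReal.tsum_prod', tsum_fintype, Finset.sum_congr rfl fun φ _ => hfiber φ,
    Finset.sum_const, Finset.card_univ, Fintype.card_embedding_eq, nsmul_eq_mul]

theorem integral_ncard_motifOcc (hP : ∀ e f, P e f → e ∈ H.edgeSet ∧ f ∈ H.edgeSet)
    (hψ : Integrable (fun k : ℕ => (k : ℝ)) ψ) :
    ∫ ω, ((motifOcc H P δ ω).ncard : ℝ) ∂(model (Fin n) ν ψ) =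
      n.descFactorial (Fintype.card VH) * (lmdMean ψ ^ H.edgeSet.ncard *
        (Measure.pi fun _ => ν).real (motifTuples H P δ)) := by
  have hmean : ∫⁻ k, (k : ℝ≥0∞) ∂ψ ≠ ∞ := by
    simpa using hψ.lintegral_lt_top.ne
  have hfin : ∑' q, model (Fin n) ν ψ (occurrenceEvent H P δ q) ≠ ∞ := by
    rw [tsum_measure_occurrenceEvent]
    finiteness
  simp_rw [ncard_motifOcc hP]
  rw [integral_ncard (S := fun ω => {q | ω ∈ occurrenceEvent H P δ q})
    measurableSet_occurrenceEvent hfin]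
  simp only [Set.mem_ofPred_eq, Set.ofPred_mem_eq, tsum_measure_occurrenceEvent, Fintype.card_fin,
    ENNReal.toReal_mul, ENNReal.toReal_pow, ENNReal.toReal_natCast,
    toReal_lintegral_natCast_eq_lmdMean, measureReal_def]

end Motif

theorem statement12_general {VH : Type*} [Fintype VH] (H : SimpleGraph VH)
    (P : Sym2 VH → Sym2 VH → Prop) (hP : ∀ e f, P e f → e ∈ H.edgeSet ∧ f ∈ H.edgeSet)
    (ψ : Measure ℕ) [IsProbabilityMeasure ψ] (hψ : Integrable (fun k : ℕ => (k : ℝ)) ψ)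
    (δ : ℝ) (hδ : 0 < δ) (hδ1 : δ ≤ 1) (n : ℕ) :
    ∫ ω, ((motifOcc H P δ ω).ncard : ℝ) ∂(contModel (Fin n) ψ)
      = δ ^ H.edgeSet.ncard * lmdMean ψ ^ H.edgeSet.ncard
        * (Nat.factorial (Fintype.card VH) : ℝ)
        * ((numLinExtOn H.edgeSet P : ℝ) / (Nat.factorial H.edgeSet.ncard : ℝ))
        * (n.choose (Fintype.card VH) : ℝ)
        * (1 + H.edgeSet.ncard * (1 - δ) / δ) := by
  have := Fintype.ofFinite H.edgeSet
  rw [contModel, integral_ncard_motifOcc unif01 ψ hP hψ, measureReal_pi_unif01_motifTuples hδ hδ1,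
    Nat.descFactorial_eq_factorial_mul_choose]
  push_cast
  ring

/-- The expected number of `δ`-temporal occurrences of `(H, P)` in
`Γ_{[n]}(ψ)`. -/
theorem statement12 {VH : Type} [Fintype VH] [DecidableEq VH] (H : SimpleGraph VH)
    (P : Sym2 VH → Sym2 VH → Prop) (hP : StrictPartialOrderOn H.edgeSet P)
    (ψ : Measure ℕ) (hψ : IsLMD ψ) (δ : ℝ) (hδ : 0 < δ) (hδ1 : δ < 1) (n : ℕ) :
    ∫ ω, ((motifOcc H P δ ω).ncard : ℝ) ∂(contModel (Fin n) ψ)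
      = δ ^ H.edgeSet.ncard * lmdMean ψ ^ H.edgeSet.ncard
        * (Nat.factorial (Fintype.card VH) : ℝ)
        * ((numLinExtOn H.edgeSet P : ℝ) / (Nat.factorial H.edgeSet.ncard : ℝ))
        * (n.choose (Fintype.card VH) : ℝ)
        * (1 + H.edgeSet.ncard * (1 - δ) / δ) := by
  have := hψ.1
  exact statement12_general H P hP.2.2 ψ hψ.2.1 δ hδ hδ1.le n

end RTG
end
end
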